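/- 1436697831295441 is a Carmichael number with exactly 10 distinct prime factors, and it is the smallest such: every Carmichael number with exactly 10 distinct prime factors is at least 1436697831295441. -/

import Mathlib

/-- A Carmichael number: a composite natural number `N` such that
`b ^ (N - 1) ≡ 1 [MOD N]` for every `b` coprime to `N`. -/
def IsCarmichael (N : ℕ) : Prop :=
  1 < N ∧ ¬ N.Prime ∧ ∀ b : ℕ, Nat.Coprime b N → b ^ (N - 1) ≡ 1 [MOD N]

/-!
By Korselt's criterion, a Carmichael number is a composite squarefree `N` with `p - 1 ∣ N - 1` for
every prime `p ∣ N`. A counterexample `N` is therefore a product of ten distinct primes, which we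
look for by branch and bound, deciding for each prime in increasing order whether it divides `N`.
If `P` is the product of the primes chosen so far and `k` more are needed, all of them at least `p`,
then `P * p ^ k ≤ N` bounds `p`. Since `p - 1 ∣ N - 1` is coprime to `P ∣ N`, many choices of `p`
are ruled out at once. About `6 * 10 ^ 4` products `N` are completed, and none of them satisfies
`lcm (p - 1) ∣ N - 1`.
-/

open ArithmeticFunction (carmichael)

section KorseltCriterion

theorem forall_coprime_pow_modEq_one_iff {N m : ℕ} (hN : N ≠ 0) :
    (∀ b : ℕ, b.Coprime N → b ^ m ≡ 1 [MOD N]) ↔ carmichael N ∣ m := by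
  have : NeZero N := ⟨hN⟩
  rw [ArithmeticFunction.carmichael_eq_exponent hN, Monoid.exponent_dvd_iff_forall_pow_eq_one]
  constructor
  · intro h u
    have hu := (ZMod.natCast_eq_natCast_iff _ _ _).2 (h _ (ZMod.val_coe_unit_coprime u))
    ext
    simpa using hu
  · intro h b hb
    rw [← ZMod.natCast_eq_natCast_iff]
    simpa using congrArg Units.val (h (ZMod.unitOfCoprime b hb))

theorem carmichael_prime {p : ℕ} (hp : p.Prime) : carmichael p = p - 1 := by
  obtain rfl | hp2 := eq_or_ne p 2
  · simpa using ArithmeticFunction.carmichael_two_pow_of_le_two (n := 1) one_le_two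
  · simpa [Nat.totient_prime hp] using ArithmeticFunction.carmichael_pow_of_prime_ne_two 1 hp hp2

theorem carmichael_prime_sq {p : ℕ} (hp : p.Prime) : carmichael (p ^ 2) = p * (p - 1) := by
  have htotient : (p ^ 2).totient = p * (p - 1) := by
    rw [Nat.totient_prime_pow_succ hp, pow_one]
  obtain rfl | hp2 := eq_or_ne p 2
  · rw [ArithmeticFunction.carmichael_two_pow_of_le_two_eq_totient le_rfl, htotient]
  · rw [ArithmeticFunction.carmichael_pow_of_prime_ne_two 2 hp hp2, htotient]

theorem carmichael_dvd_iff_of_squarefree {N m : ℕ} (hN : Squarefree N) :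
    carmichael N ∣ m ↔ ∀ p ∈ N.primeFactors, p - 1 ∣ m := by
  have : NeZero N := ⟨hN.ne_zero⟩
  rw [ArithmeticFunction.carmichael_factorization, Finset.lcm_dvd_iff]
  refine forall₂_congr fun p hp => ?_
  have hpp := Nat.prime_of_mem_primeFactors hp
  rw [Nat.factorization_eq_one_of_squarefree hN hpp (Nat.dvd_of_mem_primeFactors hp), pow_one,
    carmichael_prime hpp]

theorem coprime_of_dvd_of_dvd_sub_one {N a b : ℕ} (hN : 0 < N) (ha : a ∣ N - 1) (hb : b ∣ N) :
    a.Coprime b :=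
  .of_dvd ha hb <| (Nat.coprime_self_sub_left hN).2 <| Nat.coprime_one_left N

theorem squarefree_of_carmichael_dvd_sub_one {N : ℕ} (hN : 0 < N) (h : carmichael N ∣ N - 1) :
    Squarefree N := by
  refine Nat.squarefree_iff_prime_squarefree.2 fun p hp hpp => ?_
  have hdvd : p ∣ N - 1 :=
    calc
      p ∣ carmichael (p ^ 2) := carmichael_prime_sq hp ▸ dvd_mul_right p (p - 1)
      _ ∣ carmichael N := ArithmeticFunction.carmichael_dvd (sq p ▸ hpp)
      _ ∣ N - 1 := h
  exact hp.ne_one <| (Nat.coprime_self p).1 <|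
    coprime_of_dvd_of_dvd_sub_one hN hdvd (dvd_of_mul_left_dvd hpp)

theorem isCarmichael_iff_korselt {N : ℕ} : IsCarmichael N ↔
    1 < N ∧ ¬ N.Prime ∧ Squarefree N ∧ ∀ p ∈ N.primeFactors, p - 1 ∣ N - 1 := by
  refine and_congr_right fun hN => and_congr_right fun _ => ?_
  rw [forall_coprime_pow_modEq_one_iff (by omega)]
  constructor
  · intro h
    have hsq := squarefree_of_carmichael_dvd_sub_one (by omega) h
    exact ⟨hsq, (carmichael_dvd_iff_of_squarefree hsq).1 h⟩
  · rintro ⟨hsq, h⟩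
    exact (carmichael_dvd_iff_of_squarefree hsq).2 h

end KorseltCriterion

section Search

/-- A branch-and-bound search for a number `N < B` that is the product of `P` and `k` distinct
members `q` of a sorted list, subject to `L ∣ N - 1` and `q - 1 ∣ N - 1`, where `k`, `P` and `L` are
the last three arguments. The value `false` certifies that there is none; the value is `true` also
if the list ends before the bound `B` has cut off the search.

The tests use `Nat.blt` and `Nat.beq` instead of decidable propositions to make evaluation in the
kernel fast. -/
def korseltSearch (B : ℕ) : List ℕ → ℕ → ℕ → ℕ → Bool
  | _, 0, P, L => ((P - 1) % L).beq 0
  | [], _ + 1, _, _ => true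
  | p :: l, k + 1, P, L =>
    (P * p ^ (k + 1)).blt B &&
      (((p - 1).gcd P).beq 1 && korseltSearch B l k (P * p) (L.lcm (p - 1)) ||
        korseltSearch B l (k + 1) P L)

theorem korseltSearch_eq_true {B N : ℕ} (hpos : 0 < N) (hlt : N < B) {l : List ℕ}
    (hl : l.Pairwise (· < ·)) {S : Finset ℕ} {k P L : ℕ} (hcard : S.card = k)
    (hprod : P * ∏ q ∈ S, q = N) (hL : L ∣ N - 1) (hS : ∀ q ∈ S, q - 1 ∣ N - 1)
    (hmem : ∀ q ∈ S, q ∈ l ∨ ∀ p ∈ l, p ≤ q) : korseltSearch B l k P L = true := by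
  fun_induction korseltSearch B l k P L generalizing S with
  | case1 l P L =>
    obtain rfl := Finset.card_eq_zero.1 hcard
    rw [Finset.prod_empty, mul_one] at hprod
    rw [hprod, Nat.mod_eq_zero_of_dvd hL]
    rfl
  | case2 => rfl
  | case3 p l k P L ih_mem ih_notMem =>
    rw [List.pairwise_cons] at hl
    have hle : ∀ q ∈ S, p ≤ q := fun q hq => by
      obtain h | h := hmem q hq
      · obtain rfl | h := List.mem_cons.1 h
        exacts [le_rfl, (hl.1 q h).le]
      · exact h p List.mem_cons_self
    have hmem_tail : ∀ q ∈ S, q ≠ p → q ∈ l ∨ ∀ x ∈ l, x ≤ q := fun q hq hqp =>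
      (hmem q hq).imp (fun h => (List.mem_cons.1 h).resolve_left hqp)
        fun h x hx => h x (List.mem_cons_of_mem p hx)
    have hbound : P * p ^ (k + 1) < B :=
      calc
        P * p ^ (k + 1) = P * p ^ S.card := by rw [hcard]
        _ ≤ P * ∏ q ∈ S, q := Nat.mul_le_mul_left P (Finset.pow_card_le_prod S _ p hle)
        _ < B := hprod ▸ hlt
    simp only [Bool.and_eq_true, Bool.or_eq_true, Nat.blt_eq, Nat.beq_eq]
    refine ⟨hbound, ?_⟩
    by_cases hp : p ∈ S
    · left
      have hprod_erase : P * p * ∏ q ∈ S.erase p, q = N := by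
        rw [mul_assoc, Finset.mul_prod_erase S (fun q => q) hp, hprod]
      refine ⟨coprime_of_dvd_of_dvd_sub_one hpos (hS p hp) (Dvd.intro _ hprod),
        ih_mem hl.2 ?_ hprod_erase (Nat.lcm_dvd hL (hS p hp))
          (fun q hq => hS q (Finset.mem_of_mem_erase hq))
          fun q hq => hmem_tail q (Finset.mem_of_mem_erase hq) (Finset.ne_of_mem_erase hq)⟩
      rw [Finset.card_erase_of_mem hp, hcard, Nat.succ_sub_one]
    · right
      exact ih_notMem hl.2 hcard hprod hL hS fun q hq =>
        hmem_tail q hq (ne_of_mem_of_not_mem hq hp)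

/-- The primes below `3002`, in increasing order, obtained by trial division by the primes whose
square is below `3002`. In the search below `1436697831295441`, the bound cuts off every branch
before it reaches a prime larger than `2909`. -/
def smallPrimes : List ℕ :=
  (List.range' 2 3000).filter fun n =>
    [2, 3, 5, 7, 11, 13, 17, 19, 23, 29, 31, 37, 41, 43, 47, 53].all fun d =>
      n.beq d || !(n % d).beq 0

theorem pairwise_lt_smallPrimes : smallPrimes.Pairwise (· < ·) :=
  List.Pairwise.filter _ List.pairwise_lt_range'

theorem mem_smallPrimes {p : ℕ} (hp : p.Prime) (hlt : p < 3002) : p ∈ smallPrimes := by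
  have hrange : p ∈ List.range' 2 3000 := List.mem_range'_1.2 ⟨hp.two_le, hlt⟩
  refine List.mem_filter.2 ⟨hrange, List.all_eq_true.2 fun d hd => ?_⟩
  have hd_ne : d ≠ 1 := ne_of_mem_of_not_mem hd (by decide)
  have hdvd : d ∣ p → p = d := fun h => (((Nat.dvd_prime hp).1 h).resolve_left hd_ne).symm
  simpa [Nat.dvd_iff_mod_eq_zero, or_iff_not_imp_right] using hdvd

theorem korseltSearch_smallPrimes :
    korseltSearch 1436697831295441 smallPrimes 10 1 1 = false := by
  decide +kernel

end Search

theorem primeFactorsList_1436697831295441 : Nat.primeFactorsList 1436697831295441 =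
    [11, 13, 19, 29, 31, 37, 41, 43, 71, 127] := by
  simp only [Nat.primeFactorsList_ofNat]

theorem primeFactors_1436697831295441 : Nat.primeFactors 1436697831295441 =
    {11, 13, 19, 29, 31, 37, 41, 43, 71, 127} := by
  simp [Nat.primeFactors, primeFactorsList_1436697831295441]

theorem isCarmichael_1436697831295441 : IsCarmichael 1436697831295441 := by
  refine isCarmichael_iff_korselt.2 ⟨by norm_num, by norm_num, ?_, ?_⟩
  · rw [Nat.squarefree_iff_nodup_primeFactorsList (by norm_num), primeFactorsList_1436697831295441]
    decide
  · rw [primeFactors_1436697831295441]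
    decide

theorem IsCarmichael.le_of_card_primeFactors_eq_ten {N : ℕ} (hN : IsCarmichael N)
    (hcard : N.primeFactors.card = 10) : 1436697831295441 ≤ N := by
  obtain ⟨hN1, -, hsq, hdvd⟩ := isCarmichael_iff_korselt.1 hN
  by_contra! hlt
  have hmem : ∀ q ∈ N.primeFactors, q ∈ smallPrimes ∨ ∀ p ∈ smallPrimes, p ≤ q := by
    intro q hq
    refine (lt_or_ge q 3002).imp (mem_smallPrimes (Nat.prime_of_mem_primeFactors hq)) ?_
    intro hq p hp
    have := (List.mem_range'_1.1 (List.mem_of_mem_filter hp)).2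
    omega
  have hfound := korseltSearch_eq_true (zero_lt_one.trans hN1) hlt pairwise_lt_smallPrimes hcard
    (by rw [one_mul, Nat.prod_primeFactors_of_squarefree hsq]) (one_dvd _) hdvd hmem
  exact Bool.false_ne_true (korseltSearch_smallPrimes.symm.trans hfound)

theorem carmichael_smallest_with_10_prime_factors :
    IsCarmichael 1436697831295441 ∧ (Nat.primeFactors 1436697831295441).card = 10 ∧
      ∀ N : ℕ, IsCarmichael N → N.primeFactors.card = 10 → 1436697831295441 ≤ N := by
  refine ⟨isCarmichael_1436697831295441, ?_, fun N => IsCarmichael.le_of_card_primeFactors_eq_ten⟩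
  rw [primeFactors_1436697831295441]
  rfl
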